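/- Let 𝕄 = ⟨M, 𝒞⟩ be a countable transitive model of GB⁻, let γ ∈ Ord^M and let Y ∈ 𝒞 be a proper class of 𝕄. Then the forcing notion Col*(γ, Y)^M has the set decision property. -/

import Mathlib

noncomputable section

namespace CF

open scoped ZFSet

universe u

attribute [local instance] Classical.propDecidable

/-! ### First-order formulas of the language of set theory -/

/-- First-order `∈`-formulas with variables indexed by `ℕ`. -/
inductive EFormula : Type
  | mem : ℕ → ℕ → EFormula
  | eq : ℕ → ℕ → EFormula
  | not : EFormula → EFormula
  | or : EFormula → EFormula → EFormula
  | ex : ℕ → EFormula → EFormula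

/-- Satisfaction of an `∈`-formula in the structure `⟨D, ∈⟩` under assignment `v`. -/
def EFormula.Sat (D : Set ZFSet) (v : ℕ → ZFSet) : EFormula → Prop
  | .mem i j => v i ∈ v j
  | .eq i j => v i = v j
  | .not φ => ¬ EFormula.Sat D v φ
  | .or φ ψ => EFormula.Sat D v φ ∨ EFormula.Sat D v ψ
  | .ex i φ => ∃ x ∈ D, EFormula.Sat D (Function.update v i x) φ

/-- All variables occurring in the formula are `< m`. -/
def EFormula.VarsLt (m : ℕ) : EFormula → Prop
  | .mem i j => i < m ∧ j < m
  | .eq i j => i < m ∧ j < m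
  | .not φ => EFormula.VarsLt m φ
  | .or φ ψ => EFormula.VarsLt m φ ∧ EFormula.VarsLt m ψ
  | .ex i φ => i < m ∧ EFormula.VarsLt m φ

/-- First-order formulas of the two-sorted language of `GB⁻`: set variables indexed by `ℕ`,
class parameters indexed by `ℕ`, and only set quantifiers. -/
inductive GBFormula : Type
  | mem : ℕ → ℕ → GBFormula
  | eq : ℕ → ℕ → GBFormula
  | cls : ℕ → ℕ → GBFormula    -- `vᵢ ∈ C_j`
  | not : GBFormula → GBFormula
  | or : GBFormula → GBFormula → GBFormula
  | ex : ℕ → GBFormula → GBFormula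

/-- Satisfaction of a `GBFormula` with set quantifiers ranging over `Mset`,
class parameters `Cs` and set assignment `v`. -/
def GBFormula.Sat (Mset : Set ZFSet) (Cs : ℕ → Set ZFSet) (v : ℕ → ZFSet) : GBFormula → Prop
  | .mem i j => v i ∈ v j
  | .eq i j => v i = v j
  | .cls i j => v i ∈ Cs j
  | .not φ => ¬ GBFormula.Sat Mset Cs v φ
  | .or φ ψ => GBFormula.Sat Mset Cs v φ ∨ GBFormula.Sat Mset Cs v ψ
  | .ex i φ => ∃ x ∈ Mset, GBFormula.Sat Mset Cs (Function.update v i x) φ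

/-! ### Countable transitive models of GB⁻ -/

/-- A countable transitive second-order model `𝕄 = ⟨M, 𝒞⟩` of `GB⁻`:
`M` is transitive and countable, classes are subsets of `M`, sets are classes, and the axioms
of `GB⁻` hold (extensionality and foundation are automatic for `ZFSet`; the set axioms of `ZF⁻`
with separation and collection allowing class parameters, together with first-order class
comprehension, are listed). -/
structure GBModel where
  M : Set ZFSet.{u}
  Cls : Set (Set ZFSet)
  countable_M : M.Countable
  countable_Cls : Cls.Countable
  transitive : ∀ x ∈ M, ∀ y : ZFSet, y ∈ x → y ∈ M
  sets_are_classes : ∀ x ∈ M, x.toSet ∈ Cls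
  classes_sub : ∀ C ∈ Cls, C ⊆ M
  empty_mem : (∅ : ZFSet) ∈ M
  pair_mem : ∀ x ∈ M, ∀ y ∈ M, ({x, y} : ZFSet) ∈ M
  sUnion_mem : ∀ x ∈ M, (⋃₀ x : ZFSet) ∈ M
  omega_mem : ZFSet.omega ∈ M
  comprehension : ∀ (φ : GBFormula) (v : ℕ → ZFSet) (Cs : ℕ → Set ZFSet),
    (∀ n, v n ∈ M) → (∀ n, Cs n ∈ Cls) →
    {x : ZFSet | x ∈ M ∧ GBFormula.Sat M Cs (Function.update v 0 x) φ} ∈ Cls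
  separation : ∀ C ∈ Cls, ∀ a ∈ M, ∃ b ∈ M, ∀ x : ZFSet, x ∈ b ↔ x ∈ a ∧ x ∈ C
  collection : ∀ C ∈ Cls, ∀ a ∈ M,
    (∀ x : ZFSet, x ∈ a → ∃ y ∈ M, x.pair y ∈ C) →
    ∃ b ∈ M, ∀ x : ZFSet, x ∈ a → ∃ y : ZFSet, y ∈ b ∧ x.pair y ∈ C

/-- A notion of class forcing `ℙ = ⟨P, ≤_ℙ⟩` for `𝕄`: a partial order (with maximal element
`𝟙_ℙ`) whose domain and order relation are classes of `𝕄`. -/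
structure ClassForcing (𝕄 : GBModel) where
  P : Set ZFSet
  le : ZFSet → ZFSet → Prop
  one : ZFSet
  one_mem : one ∈ P
  le_one : ∀ p ∈ P, le p one
  le_refl : ∀ p ∈ P, le p p
  le_trans : ∀ p q r : ZFSet, le p q → le q r → le p r
  P_cls : P ∈ 𝕄.Cls
  le_cls : {x : ZFSet | ∃ p ∈ P, ∃ q ∈ P, le p q ∧ x = p.pair q} ∈ 𝕄.Cls

/-! ### Names and their evaluation -/

/-- Auxiliary rank-bounded version of `IsName`. -/
def IsNameAux (S : Set ZFSet) (o : Ordinal) (σ : ZFSet) : Prop :=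
  ∀ x ∈ σ.toSet, ∃ τ p : ZFSet, x = τ.pair p ∧ p ∈ S ∧
    ∃ _h : τ.rank < o, IsNameAux S τ.rank τ
termination_by o

/-- `σ` is a `ℙ`-name (for the forcing with conditions `S`): every element of `σ` is a pair
`⟨τ, p⟩` with `τ` a `ℙ`-name and `p ∈ S`. -/
def IsName (S : Set ZFSet) (σ : ZFSet) : Prop := IsNameAux S σ.rank σ

/-- Image of a ZFSet under an arbitrary function (using choice for definability). -/
def zimage (f : ZFSet → ZFSet) (x : ZFSet) : ZFSet :=
  @ZFSet.image f (Classical.allZFSetDefinable _) x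

/-- Auxiliary rank-bounded version of the evaluation `σ^G` of a name by a filter. -/
def nameEvalAux (G : Set ZFSet) (o : Ordinal) (σ : ZFSet) : ZFSet :=
  zimage (fun τ => if h : τ.rank < o then nameEvalAux G τ.rank τ else ∅)
    (ZFSet.sep (fun τ => ∃ p, p ∈ G ∧ τ.pair p ∈ σ) (⋃₀ ⋃₀ σ))
termination_by o
decreasing_by exact h

/-- The evaluation `σ^G = {τ^G | ∃ p ∈ G, ⟨τ, p⟩ ∈ σ}` of a name `σ` by a filter `G`. -/
def nameEval (G : Set ZFSet) (σ : ZFSet) : ZFSet := nameEvalAux G σ.rank σ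

/-- Auxiliary rank-bounded version of `nameTC`. -/
def nameTCAux (o : Ordinal) (σ : ZFSet) : Set ZFSet :=
  {x | ∃ τ p : ZFSet, τ.pair p ∈ σ ∧ (x = p ∨ ∃ _h : τ.rank < o, x ∈ nameTCAux τ.rank τ)}
termination_by o

/-- The set `tc(σ) = ⋃ {{p} ∪ tc(τ) | ⟨τ,p⟩ ∈ σ}` of conditions appearing in the transitive
closure of the name `σ`. -/
def nameTC (σ : ZFSet) : Set ZFSet := nameTCAux σ.rank σ

/-! ### Filters, genericity, generic extensions -/

/-- `G` is a filter on the partial order with domain `S` and ordering `le`. -/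
def IsFilterOn (S : Set ZFSet) (le : ZFSet → ZFSet → Prop) (G : Set ZFSet) : Prop :=
  G ⊆ S ∧ G.Nonempty ∧ (∀ p ∈ G, ∀ q ∈ S, le p q → q ∈ G) ∧
    ∀ p ∈ G, ∀ q ∈ G, ∃ r ∈ G, le r p ∧ le r q

/-- `D` is a dense subclass of the partial order `⟨S, le⟩`. -/
def DenseIn (S : Set ZFSet) (le : ZFSet → ZFSet → Prop) (D : Set ZFSet) : Prop :=
  D ⊆ S ∧ ∀ p ∈ S, ∃ q ∈ D, le q p

/-- `G` is a generic filter on `⟨S, le⟩` over `𝕄`: a filter meeting every dense subclass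
of `⟨S, le⟩` lying in `𝒞`. -/
def IsGeneric (𝕄 : GBModel) (S : Set ZFSet) (le : ZFSet → ZFSet → Prop) (G : Set ZFSet) : Prop :=
  IsFilterOn S le G ∧ ∀ D ∈ 𝕄.Cls, DenseIn S le D → (G ∩ D).Nonempty

/-- The generic extension `M[G] = {σ^G | σ ∈ M a name for the forcing with domain S}`. -/
def MGen (𝕄 : GBModel) (S : Set ZFSet) (G : Set ZFSet) : Set ZFSet :=
  {x | ∃ σ : ZFSet, σ ∈ 𝕄.M ∧ IsName S σ ∧ nameEval G σ = x}

/-! ### Compatibility, the set decision property -/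

/-- `p` and `q` are compatible in `⟨S, le⟩`. -/
def Compat (S : Set ZFSet) (le : ZFSet → ZFSet → Prop) (p q : ZFSet) : Prop :=
  ∃ r ∈ S, le r p ∧ le r q

/-- `p ≤* q` : every extension of `p` is compatible with `q`. -/
def leStar (S : Set ZFSet) (le : ZFSet → ZFSet → Prop) (p q : ZFSet) : Prop :=
  ∀ r ∈ S, le r p → Compat S le r q

/-- `p` decides the set of conditions `A`: for every `a ∈ A`, either `p ≤* a` or `p ⊥ a`. -/
def Decides (S : Set ZFSet) (le : ZFSet → ZFSet → Prop) (p A : ZFSet) : Prop :=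
  ∀ a : ZFSet, a ∈ A → leStar S le p a ∨ ¬ Compat S le p a

/-- The set decision property: every set of conditions in `M` is decided densely. -/
def SetDecisionProperty (𝕄 : GBModel) (F : ClassForcing 𝕄) : Prop :=
  ∀ p ∈ F.P, ∀ A : ZFSet, A ∈ 𝕄.M → (∀ a : ZFSet, a ∈ A → a ∈ F.P) →
    ∃ q ∈ F.P, F.le q p ∧ Decides F.P F.le q A

/-! ### The forcing theorem -/

/-- Encode a finite list of sets as a single set by iterated Kuratowski pairing. -/
def listEncode : List ZFSet → ZFSet
  | [] => ∅
  | a :: l => a.pair (listEncode l)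

/-- The assignment sending variable `n < m` to `σₙ^G` (and `∅` beyond `m`). -/
def namesAssign (G : Set ZFSet) (m : ℕ) (σs : Fin m → ZFSet) : ℕ → ZFSet :=
  fun n => if h : n < m then nameEval G (σs ⟨n, h⟩) else ∅

/-- `p ⊩_ℙ φ(σ₀, …, σ_{m-1})` : for every generic `G ∋ p`, `M[G] ⊨ φ(σ₀^G, …, σ_{m-1}^G)`. -/
def Forces (𝕄 : GBModel) (F : ClassForcing 𝕄) (φ : EFormula) (m : ℕ) (p : ZFSet)
    (σs : Fin m → ZFSet) : Prop :=
  ∀ G : Set ZFSet, IsGeneric 𝕄 F.P F.le G → p ∈ G →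
    EFormula.Sat (MGen 𝕄 F.P G) (namesAssign G m σs) φ

/-- `ℙ` satisfies the forcing theorem over `𝕄`: for every `∈`-formula `φ(v₀,…,v_{m-1})`,
the forcing relation is a class of `𝕄` (definability lemma) and everything true in a generic
extension is forced by a condition in the generic filter (truth lemma). -/
def SatisfiesForcingTheorem (𝕄 : GBModel) (F : ClassForcing 𝕄) : Prop :=
  ∀ (φ : EFormula) (m : ℕ), EFormula.VarsLt m φ →
    ({x : ZFSet | ∃ p ∈ F.P, ∃ σs : Fin m → ZFSet,
        (∀ i, σs i ∈ 𝕄.M ∧ IsName F.P (σs i)) ∧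
        Forces 𝕄 F φ m p σs ∧
        x = p.pair (listEncode (List.ofFn σs))} ∈ 𝕄.Cls) ∧
    ∀ σs : Fin m → ZFSet, (∀ i, σs i ∈ 𝕄.M ∧ IsName F.P (σs i)) →
      ∀ G : Set ZFSet, IsGeneric 𝕄 F.P F.le G →
        EFormula.Sat (MGen 𝕄 F.P G) (namesAssign G m σs) φ →
        ∃ p ∈ G, Forces 𝕄 F φ m p σs

/-! ### Complete subforcings, the set reduction property -/

/-- `A` is an antichain of the partial order `⟨S, le⟩`. -/
def IsAntichainIn (S : Set ZFSet) (le : ZFSet → ZFSet → Prop) (A : Set ZFSet) : Prop :=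
  A ⊆ S ∧ ∀ p ∈ A, ∀ q ∈ A, p ≠ q → ¬ Compat S le p q

/-- `A` is a maximal antichain of the partial order `⟨S, le⟩`. -/
def IsMaxAntichainIn (S : Set ZFSet) (le : ZFSet → ZFSet → Prop) (A : Set ZFSet) : Prop :=
  IsAntichainIn S le A ∧ ∀ p ∈ S, ∃ a ∈ A, Compat S le p a

/-- `ℚ ⊲∘ ℙ` : `Q` is a set-sized complete subforcing of `ℙ` (with the induced ordering):
`Q ∈ M`, `Q ⊆ P`, `𝟙 ∈ Q`, and every maximal antichain of `ℚ` in `M` is predense in `ℙ`. -/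
def IsCompleteSub (𝕄 : GBModel) (F : ClassForcing 𝕄) (Q : ZFSet) : Prop :=
  Q ∈ 𝕄.M ∧ Q.toSet ⊆ F.P ∧ F.one ∈ Q ∧
    ∀ A : ZFSet, A ∈ 𝕄.M → A.toSet ⊆ Q.toSet → IsMaxAntichainIn Q.toSet F.le A.toSet →
      ∀ p ∈ F.P, ∃ a : ZFSet, a ∈ A ∧ Compat F.P F.le p a

/-- `ℚ^{∥q}` : the conditions of `Q` compatible with `q` in `ℙ`. -/
def QPar (𝕄 : GBModel) (F : ClassForcing 𝕄) (Q : ZFSet) (q : ZFSet) : Set ZFSet :=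
  {r | r ∈ Q ∧ Compat F.P F.le r q}

/-- The property `(*)(A, q, ℚ)`: for every `a ∈ A`, the set of `r ∈ ℚ^{∥q}` such that either
all `s ≤ q, r` satisfy `s ≤* a`, or all `s ≤ q, r` satisfy `s ⊥ a`, is dense in `ℚ^{∥q}`. -/
def StarProp (𝕄 : GBModel) (F : ClassForcing 𝕄) (A q Q : ZFSet) : Prop :=
  ∀ a : ZFSet, a ∈ A → ∀ r₀ ∈ QPar 𝕄 F Q q, ∃ r₁ ∈ QPar 𝕄 F Q q, F.le r₁ r₀ ∧
    ((∀ s ∈ F.P, F.le s q → F.le s r₁ → leStar F.P F.le s a) ∨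
      (∀ s ∈ F.P, F.le s q → F.le s r₁ → ¬ Compat F.P F.le s a))

/-- The set reduction property. -/
def SetReductionProperty (𝕄 : GBModel) (F : ClassForcing 𝕄) : Prop :=
  ∀ A : ZFSet, A ∈ 𝕄.M → (∀ a : ZFSet, a ∈ A → a ∈ F.P) →
    ∀ p ∈ F.P, ∃ q ∈ F.P, F.le q p ∧ ∃ Q : ZFSet, IsCompleteSub 𝕄 F Q ∧ StarProp 𝕄 F A q Q

/-- Every new set added by `ℙ` is added by a set-sized complete subforcing of `ℙ`. -/
def EveryNewSetBySub (𝕄 : GBModel) (F : ClassForcing 𝕄) : Prop :=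
  ∀ G : Set ZFSet, IsGeneric 𝕄 F.P F.le G →
    ∀ x : ZFSet, x ∈ MGen 𝕄 F.P G → x ∉ 𝕄.M →
      ∃ Q : ZFSet, IsCompleteSub 𝕄 F Q ∧ x ∈ MGen 𝕄 Q.toSet (G ∩ Q.toSet)

/-! ### The q-reduction of a name -/

/-- First component of a Kuratowski pair (junk value `∅` otherwise). -/
def fstZ (x : ZFSet) : ZFSet :=
  if h : ∃ a b : ZFSet, x = a.pair b then h.choose else ∅

/-- Second component of a Kuratowski pair (junk value `∅` otherwise). -/
def sndZ (x : ZFSet) : ZFSet :=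
  if h : ∃ a b : ZFSet, x = a.pair b then h.choose_spec.choose else ∅

/-- Cartesian product of two `ZFSet`s. -/
def zprod (a b : ZFSet) : ZFSet :=
  ZFSet.sep (fun x => ∃ u v : ZFSet, u ∈ a ∧ v ∈ b ∧ x = u.pair v)
    (ZFSet.powerset (ZFSet.powerset (a ∪ b)))

/-- Auxiliary rank-bounded version of the `q`-reduction of a name to `Q`. -/
def reduceAux (S : Set ZFSet) (le : ZFSet → ZFSet → Prop) (Q q : ZFSet) (o : Ordinal)
    (σ : ZFSet) : ZFSet :=
  zimage
    (fun x =>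
      (if h : (fstZ x).rank < o then reduceAux S le Q q (fstZ x).rank (fstZ x) else ∅).pair
        (sndZ x))
    (ZFSet.sep
      (fun x => ∃ τ r : ZFSet, x = τ.pair r ∧ r ∈ Q ∧
        ∃ a : ZFSet, τ.pair a ∈ σ ∧ ∀ s ∈ S, le s q → le s r → leStar S le s a)
      (zprod (⋃₀ ⋃₀ σ) Q))
termination_by o
decreasing_by exact h

/-- The `q`-reduction `σ_q^ℚ = {⟨τ_q^ℚ, r⟩ | r ∈ ℚ ∧ ∃a (⟨τ,a⟩ ∈ σ ∧ ∀ s ≤ q,r (s ≤* a))}`. -/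
def reduceName (S : Set ZFSet) (le : ZFSet → ZFSet → Prop) (Q q σ : ZFSet) : ZFSet :=
  reduceAux S le Q q σ.rank σ

/-! ### Projections -/

/-- `f` is a projection from `⟨S, le⟩` (with maximum `one`) onto the subforcing with domain
`Qs`, respecting `X`. -/
def IsProjectionResp (S : Set ZFSet) (le : ZFSet → ZFSet → Prop) (one : ZFSet)
    (Qs X : Set ZFSet) (f : ZFSet → ZFSet) : Prop :=
  (∀ p ∈ S, f p ∈ Qs) ∧
  f one = one ∧
  (∀ p ∈ S, ∀ q ∈ S, le p q → le (f p) (f q)) ∧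
  (∀ p ∈ S, ∀ q ∈ Qs, le q (f p) → ∃ r ∈ S, le r p ∧ le (f r) q) ∧
  (∀ p ∈ X, ∀ q ∈ S, le (f q) p → le q p) ∧
  (∀ p ∈ X, f p = p)

/-- `ℙ` is approachable by projections: there is a class `Π ∈ 𝒞` whose sections `π_{X,y}`
are such that for every set `X ⊆ ℙ` there are a set `y` and a set-sized subforcing `ℚ ⊇ X ∪ {𝟙}`
of `ℙ` with `π_{X,y} : ℙ → ℚ` a projection respecting `X`. -/
def ApproachableByProjections (𝕄 : GBModel) (F : ClassForcing 𝕄) : Prop :=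
  ∃ Pi ∈ 𝕄.Cls, ∀ X : ZFSet, X ∈ 𝕄.M → (∀ x : ZFSet, x ∈ X → x ∈ F.P) →
    ∃ y ∈ 𝕄.M, ∃ Q : ZFSet, Q ∈ 𝕄.M ∧ Q.toSet ⊆ F.P ∧ (∀ x : ZFSet, x ∈ X → x ∈ Q) ∧
      F.one ∈ Q ∧ ∃ f : ZFSet → ZFSet,
        (∀ u ∈ F.P, ∀ v : ZFSet, (f u = v ↔ X.pair (y.pair (u.pair v)) ∈ Pi)) ∧
        IsProjectionResp F.P F.le F.one Q.toSet X.toSet f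

/-- `p ⊩ σ ⊆ τ` for the forcing with domain `S` and ordering `le`. -/
def ForcesSubset (𝕄 : GBModel) (S : Set ZFSet) (le : ZFSet → ZFSet → Prop)
    (p σ τ : ZFSet) : Prop :=
  ∀ G : Set ZFSet, IsGeneric 𝕄 S le G → p ∈ G → nameEval G σ ⊆ nameEval G τ

/-! ### Bounded names, turning proper classes into sets -/

/-- The possible values of the name `σ` in generic extensions. -/
def PossibleValues (𝕄 : GBModel) (S : Set ZFSet) (le : ZFSet → ZFSet → Prop)
    (σ : ZFSet) : Set ZFSet :=
  {x | ∃ G : Set ZFSet, IsGeneric 𝕄 S le G ∧ nameEval G σ = x}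

/-- The name `σ` is bounded: some `A ∈ M` covers all its possible values lying in `M`. -/
def IsBoundedName (𝕄 : GBModel) (F : ClassForcing 𝕄) (σ : ZFSet) : Prop :=
  ∃ A ∈ 𝕄.M, PossibleValues 𝕄 F.P F.le σ ∩ 𝕄.M ⊆ A.toSet

/-- `ℙ` has bounded names: every `ℙ`-name in `M` is bounded. -/
def HasBoundedNames (𝕄 : GBModel) (F : ClassForcing 𝕄) : Prop :=
  ∀ σ : ZFSet, σ ∈ 𝕄.M → IsName F.P σ → IsBoundedName 𝕄 F σ

/-- `X` is a proper class of `𝕄`: a class of `𝕄` that is not (the extension of) a set of `𝕄`. -/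
def IsProperClass (𝕄 : GBModel) (X : Set ZFSet) : Prop :=
  X ∈ 𝕄.Cls ∧ ¬ ∃ x ∈ 𝕄.M, x.toSet = X

/-- The proper class `X` of `𝕄` is turned into a set by forcing with `ℙ`: some `ℙ`-name in `M`
evaluates to `X` under some generic filter. -/
def TurnsIntoSet (𝕄 : GBModel) (F : ClassForcing 𝕄) (X : Set ZFSet) : Prop :=
  ∃ σ : ZFSet, σ ∈ 𝕄.M ∧ IsName F.P σ ∧
    ∃ G : Set ZFSet, IsGeneric 𝕄 F.P F.le G ∧ (nameEval G σ).toSet = X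

/-! ### Functions and partial functions as sets, collapse forcings -/

/-- `p` is a partial function from (a subset of) `γ` into the class `Y`. -/
def IsPFunOn (p γ : ZFSet) (Y : Set ZFSet) : Prop :=
  (∀ x : ZFSet, x ∈ p → ∃ a b : ZFSet, x = a.pair b ∧ a ∈ γ ∧ b ∈ Y) ∧
  ∀ a b b' : ZFSet, a.pair b ∈ p → a.pair b' ∈ p → b = b'

/-- The domain of a set of pairs. -/
def pdom (p : ZFSet) : Set ZFSet := {a | ∃ b : ZFSet, a.pair b ∈ p}

/-- `f` is (the graph of) an injective function from `X` into `Y`. -/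
def ZInjFun (f : ZFSet) (X Y : Set ZFSet) : Prop :=
  (∀ x : ZFSet, x ∈ f → ∃ a b : ZFSet, x = a.pair b ∧ a ∈ X ∧ b ∈ Y) ∧
  (∀ a b b' : ZFSet, a.pair b ∈ f → a.pair b' ∈ f → b = b') ∧
  (∀ a ∈ X, ∃ b : ZFSet, a.pair b ∈ f) ∧
  (∀ a a' b : ZFSet, a.pair b ∈ f → a'.pair b ∈ f → a = a')

/-- `D` has size less than the cardinality of `γ` in the sense of `M`:
no function of `M` injects `γ` into `D`. -/
def SmallerThan (𝕄 : GBModel) (γ : ZFSet) (D : Set ZFSet) : Prop :=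
  ¬ ∃ f ∈ 𝕄.M, ZInjFun f γ.toSet D

/-- Conditions of `Col(γ, Y)^M`: partial functions of `M` from `γ` to `Y` whose domain has
size less than the cardinality of `γ` in `M`. -/
def ColCond (𝕄 : GBModel) (γ : ZFSet) (Y : Set ZFSet) (p : ZFSet) : Prop :=
  p ∈ 𝕄.M ∧ IsPFunOn p γ Y ∧ SmallerThan 𝕄 γ (pdom p)

/-- Conditions of `Col₋*(γ, Y)^M`: those conditions of `Col(γ, Y)^M` whose domain is
an ordinal. -/
def ColStarCond (𝕄 : GBModel) (γ : ZFSet) (Y : Set ZFSet) (p : ZFSet) : Prop :=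
  ColCond 𝕄 γ Y p ∧ ∃ β : ZFSet, β.IsOrdinal ∧ pdom p = β.toSet

/-- `f` is (the graph of) a function with domain `I`. -/
def ZFuncOn (f I : ZFSet) : Prop :=
  (∀ x : ZFSet, x ∈ f → ∃ a b : ZFSet, x = a.pair b ∧ a ∈ I) ∧
  (∀ a b b' : ZFSet, a.pair b ∈ f → a.pair b' ∈ f → b = b') ∧
  (∀ a : ZFSet, a ∈ I → ∃ b : ZFSet, a.pair b ∈ f)

/-- Application of a set-function to an argument (junk value `∅` if undefined). -/
def zapp (f i : ZFSet) : ZFSet :=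
  if h : ∃ b : ZFSet, i.pair b ∈ f then h.choose else ∅

/-! ### Pretameness -/

/-- `ℙ` is pretame for `𝕄`: for every `p ∈ ℙ`, `I ∈ M` and every `𝒞`-coded sequence
`⟨D_i | i ∈ I⟩` (coded as the class of pairs `⟨i, x⟩` with `x ∈ D_i`) of dense subclasses
of `ℙ`, there are `q ≤ p` and `⟨d_i | i ∈ I⟩ ∈ M` with `d_i ⊆ D_i` predense below `q`. -/
def Pretame (𝕄 : GBModel) (F : ClassForcing 𝕄) : Prop :=
  ∀ p ∈ F.P, ∀ I : ZFSet, I ∈ 𝕄.M → ∀ D ∈ 𝕄.Cls,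
    (∀ i : ZFSet, i ∈ I →
      (∀ x : ZFSet, i.pair x ∈ D → x ∈ F.P) ∧ ∀ r ∈ F.P, ∃ s : ZFSet, i.pair s ∈ D ∧ F.le s r) →
    ∃ q ∈ F.P, F.le q p ∧ ∃ d ∈ 𝕄.M, ZFuncOn d I ∧
      ∀ i : ZFSet, i ∈ I → (∀ x : ZFSet, x ∈ zapp d i → i.pair x ∈ D) ∧
        ∀ r ∈ F.P, F.le r q → ∃ a : ZFSet, a ∈ zapp d i ∧ Compat F.P F.le r a

/-! ### The specific forcings of Sections 6 and 7 -/

/-- Conditions of Definition 6.8: (not necessarily finite) partial functions from `ω` to `2`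
lying in `M`. -/
def PCond (𝕄 : GBModel) (p : ZFSet) : Prop :=
  p ∈ 𝕄.M ∧ IsPFunOn p ZFSet.omega {x : ZFSet | x = ∅ ∨ x = ({∅} : ZFSet)}

/-- Conditions of the finite support product `ℚ` of `ω` many copies of `ℙ`:
finite sequences `⟨p₀, …, p_k⟩` of `ℙ`-conditions. -/
def QCond (𝕄 : GBModel) (s : ZFSet) : Prop :=
  s ∈ 𝕄.M ∧ ∃ n : ZFSet, n ∈ ZFSet.omega ∧ ZFuncOn s n ∧
    ∀ i : ZFSet, i ∈ n → PCond 𝕄 (zapp s i)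

/-- The coordinatewise ordering on `ℚ`. -/
def QLe (s' s : ZFSet) : Prop :=
  pdom s ⊆ pdom s' ∧ ∀ i ∈ pdom s, zapp s i ⊆ zapp s' i

/-- The power class `𝒫(ω)^M`. -/
def PowOmega (𝕄 : GBModel) : Set ZFSet :=
  {x : ZFSet | x ∈ 𝕄.M ∧ x ⊆ ZFSet.omega}

/-- `X ⊆ M` is definable over `⟨M, ∈⟩` (from set parameters). -/
def DefinableOver (Mset : Set ZFSet) (X : Set ZFSet) : Prop :=
  ∃ (φ : EFormula) (v : ℕ → ZFSet), (∀ n, v n ∈ Mset) ∧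
    X = {x : ZFSet | x ∈ Mset ∧ EFormula.Sat Mset (Function.update v 0 x) φ}

/-- Every set of `M` is countable in `M`: it injects into `ω` by a function of `M`. -/
def AllSetsCountable (𝕄 : GBModel) : Prop :=
  ∀ x ∈ 𝕄.M, ∃ f ∈ 𝕄.M, ZInjFun f x.toSet ZFSet.omega.toSet


/-!
Let `p` be a condition with domain `β`. If `p` has no proper extension, then `p` itself decides
every set of conditions. Otherwise some extension of `p` is defined at `β`, so `p ∪ {⟨β, y⟩}` is a
condition for every `y ∈ Y`. Given a set `A` of conditions in `M`, choose `y ∈ Y` outside the ranges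
of all members of `A`, which is possible because `Y` is a proper class. If `a ∈ A` is compatible
with `p ∪ {⟨β, y⟩}`, then `a` cannot be defined at `β`; its domain being an ordinal, it is contained
in `β`, hence `a ⊆ p`. So `p ∪ {⟨β, y⟩}` lies below every member of `A` it is compatible with.
-/

variable {𝕄 : GBModel} {γ p q r a x y β δ A : ZFSet} {Y D E : Set ZFSet}

lemma left_mem_sUnion_sUnion_of_pair_mem (h : x.pair y ∈ r) : x ∈ (⋃₀ ⋃₀ r : ZFSet) :=
  ZFSet.mem_sUnion_of_mem (ZFSet.mem_singleton.2 rfl)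
    (ZFSet.mem_sUnion_of_mem (ZFSet.mem_pair.2 (.inl rfl)) h)

lemma right_mem_sUnion_sUnion_of_pair_mem (h : x.pair y ∈ r) : y ∈ (⋃₀ ⋃₀ r : ZFSet) :=
  ZFSet.mem_sUnion_of_mem (ZFSet.mem_pair.2 (.inr rfl))
    (ZFSet.mem_sUnion_of_mem (ZFSet.mem_pair.2 (.inr rfl)) h)

lemma GBModel.singleton_mem (hx : x ∈ 𝕄.M) : ({x} : ZFSet) ∈ 𝕄.M :=
  ZFSet.pair_eq_singleton x ▸ 𝕄.pair_mem x hx x hx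

lemma GBModel.orderedPair_mem (hx : x ∈ 𝕄.M) (hy : y ∈ 𝕄.M) : x.pair y ∈ 𝕄.M :=
  𝕄.pair_mem _ (singleton_mem hx) _ (𝕄.pair_mem x hx y hy)

lemma GBModel.insert_mem (hx : x ∈ 𝕄.M) (hy : y ∈ 𝕄.M) : insert x y ∈ 𝕄.M :=
  ZFSet.insert_eq x y ▸ 𝕄.sUnion_mem _ (𝕄.pair_mem _ (singleton_mem hx) y hy)

lemma IsProperClass.exists_mem_notMem (hY : IsProperClass 𝕄 Y) (hx : x ∈ 𝕄.M) :
    ∃ y ∈ Y, y ∉ x := by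
  by_contra! hYx
  obtain ⟨b, hbM, hb⟩ := 𝕄.separation Y hY.1 x hx
  exact hY.2 ⟨b, hbM, Set.ext fun z => (hb z).trans (and_iff_right_of_imp (hYx z))⟩

lemma IsProperClass.exists_mem_forall_pair_notMem (hY : IsProperClass 𝕄 Y) (hA : A ∈ 𝕄.M) :
    ∃ y ∈ Y, ∀ a ∈ A, ∀ x : ZFSet, x.pair y ∉ a := by
  obtain ⟨y, hyY, hy⟩ := hY.exists_mem_notMem
    (𝕄.sUnion_mem _ (𝕄.sUnion_mem _ (𝕄.sUnion_mem A hA)))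
  exact ⟨y, hyY, fun a ha x hxy =>
    hy (right_mem_sUnion_sUnion_of_pair_mem (ZFSet.mem_sUnion_of_mem hxy ha))⟩

lemma pdom_mono (h : p ⊆ q) : pdom p ⊆ pdom q :=
  fun _ ⟨b, hb⟩ => ⟨b, h hb⟩

lemma pdom_insert_pair : pdom (insert (x.pair y) p) = insert x (pdom p) := by
  ext z
  simp only [pdom, ZFSet.mem_insert_iff, ZFSet.pair_inj, Set.mem_ofPred_eq, Set.mem_insert_iff,
    exists_or, exists_and_left, exists_eq, and_true]

lemma IsPFunOn.mono (hr : IsPFunOn r γ Y) (hpr : p ⊆ r) : IsPFunOn p γ Y :=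
  ⟨fun z hz => hr.1 z (hpr hz), fun c d d' hd hd' => hr.2 c d d' (hpr hd) (hpr hd')⟩

lemma IsPFunOn.mem_of_mem_pdom (hp : IsPFunOn p γ Y) (hx : x ∈ pdom p) : x ∈ γ := by
  obtain ⟨y, hxy⟩ := hx
  obtain ⟨c, d, hcd, hc, -⟩ := hp.1 _ hxy
  exact (ZFSet.pair_inj.1 hcd).1 ▸ hc

lemma IsPFunOn.subset_of_pdom_subset (hr : IsPFunOn r γ Y) (har : a ⊆ r) (hpr : p ⊆ r)
    (hdom : pdom a ⊆ pdom p) : a ⊆ p := by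
  intro z hz
  obtain ⟨c, d, rfl, -, -⟩ := hr.1 z (har hz)
  obtain ⟨d', hd'⟩ := hdom ⟨d, hz⟩
  rwa [hr.2 c d d' (har hz) (hpr hd')]

lemma IsPFunOn.subset_of_notMem_pdom (hr : IsPFunOn r γ Y) (har : a ⊆ r) (hpr : p ⊆ r)
    (hβ : β.IsOrdinal) (hpβ : pdom p = β.toSet) (hδ : δ.IsOrdinal) (haδ : pdom a = δ.toSet)
    (hβa : β ∉ pdom a) : a ⊆ p := by
  rw [haδ] at hβa
  have hδβ : δ ⊆ β := (hβ.notMem_iff_subset hδ).1 hβa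
  refine hr.subset_of_pdom_subset har hpr ?_
  rw [haδ, hpβ]
  exact fun _ hz => hδβ hz

lemma IsPFunOn.insert_pair (hp : IsPFunOn p γ Y) (hx : x ∈ γ) (hxp : x ∉ pdom p) (hy : y ∈ Y) :
    IsPFunOn (insert (x.pair y) p) γ Y := by
  refine ⟨fun z hz => ?_, fun c d d' hd hd' => ?_⟩
  · obtain rfl | hz := ZFSet.mem_insert_iff.1 hz
    · exact ⟨x, y, rfl, hx, hy⟩
    · exact hp.1 z hz
  · rw [ZFSet.mem_insert_iff, ZFSet.pair_inj] at hd hd'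
    obtain ⟨rfl, rfl⟩ | hd := hd <;> obtain ⟨hc, rfl⟩ | hd' := hd'
    · rfl
    · exact absurd ⟨d', hd'⟩ hxp
    · exact absurd ⟨d, hc ▸ hd⟩ hxp
    · exact hp.2 c d d' hd hd'

lemma ZInjFun.mono_right {f : ZFSet} {X : Set ZFSet} (hf : ZInjFun f X D) (hDE : D ⊆ E) :
    ZInjFun f X E := by
  refine ⟨fun z hz => ?_, hf.2⟩
  obtain ⟨c, d, hcd, hc, hd⟩ := hf.1 z hz
  exact ⟨c, d, hcd, hc, hDE hd⟩

lemma SmallerThan.mono (hE : SmallerThan 𝕄 γ E) (hDE : D ⊆ E) : SmallerThan 𝕄 γ D :=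
  fun ⟨f, hfM, hf⟩ => hE ⟨f, hfM, hf.mono_right hDE⟩

lemma ColCond.colStarCond_insert_pair (hr : ColCond 𝕄 γ Y r) (hpr : p ⊆ r) (hpM : p ∈ 𝕄.M)
    (hβ : β.IsOrdinal) (hpβ : pdom p = β.toSet) (hβr : β ∈ pdom r) (hyY : y ∈ Y)
    (hyM : y ∈ 𝕄.M) : ColStarCond 𝕄 γ Y (insert (β.pair y) p) := by
  obtain ⟨hrM, hrfun, hrsmall⟩ := hr
  have hβM : β ∈ 𝕄.M := by
    obtain ⟨b, hb⟩ := hβr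
    exact 𝕄.transitive _ (𝕄.sUnion_mem _ (𝕄.sUnion_mem r hrM)) β
      (left_mem_sUnion_sUnion_of_pair_mem hb)
  have hβp : β ∉ pdom p := hpβ ▸ ZFSet.mem_irrefl β
  refine ⟨⟨GBModel.insert_mem (GBModel.orderedPair_mem hβM hyM) hpM,
    (hrfun.mono hpr).insert_pair (hrfun.mem_of_mem_pdom hβr) hβp hyY, ?_⟩,
    insert β β, ZFSet.isOrdinal_succ hβ, ?_⟩
  · rw [pdom_insert_pair]
    exact hrsmall.mono (Set.insert_subset hβr (pdom_mono hpr))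
  · rw [pdom_insert_pair, hpβ]
    exact (ZFSet.coe_insert β β).symm

lemma ColStarCond.mem_pdom_of_ne (hr : ColStarCond 𝕄 γ Y r) (hpr : p ⊆ r) (hne : r ≠ p)
    (hβ : β.IsOrdinal) (hpβ : pdom p = β.toSet) : β ∈ pdom r := by
  by_contra hβr
  obtain ⟨⟨-, hrfun, -⟩, δ, hδ, hrδ⟩ := hr
  have hrp : r ⊆ p := hrfun.subset_of_notMem_pdom subset_rfl hpr hβ hpβ hδ hrδ hβr
  exact hne (hrp.antisymm hpr)

lemma ColStarCond.subset_of_insert_pair_subset (ha : ColStarCond 𝕄 γ Y a)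
    (hr : IsPFunOn r γ Y) (har : a ⊆ r) (hpr : insert (β.pair y) p ⊆ r) (hβ : β.IsOrdinal)
    (hpβ : pdom p = β.toSet) (hβya : β.pair y ∉ a) : a ⊆ p := by
  have hβa : β ∉ pdom a := by
    rintro ⟨b, hb⟩
    obtain rfl : b = y := hr.2 β b y (har hb) (hpr (ZFSet.mem_insert _ _))
    exact hβya hb
  obtain ⟨-, δ, hδ, haδ⟩ := ha
  exact hr.subset_of_notMem_pdom har (fun _ hz => hpr (ZFSet.mem_insert_of_mem _ hz))
    hβ hpβ hδ haδ hβa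

lemma ColStarCond.exists_subset_forall_subset (hY : IsProperClass 𝕄 Y) (hA : A ∈ 𝕄.M)
    (hp : ColStarCond 𝕄 γ Y p) :
    ∃ q, ColStarCond 𝕄 γ Y q ∧ p ⊆ q ∧ ∀ a ∈ A, ColStarCond 𝕄 γ Y a →
      ∀ s, ColStarCond 𝕄 γ Y s → q ⊆ s → a ⊆ s → a ⊆ q := by
  by_cases hmax : ∀ r, ColStarCond 𝕄 γ Y r → p ⊆ r → r = p
  · exact ⟨p, hp, subset_rfl, fun a _ _ s hs hps has => hmax s hs hps ▸ has⟩
  · push Not at hmax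
    obtain ⟨r, hr, hpr, hne⟩ := hmax
    obtain ⟨⟨hpM, -, -⟩, β, hβ, hpβ⟩ := hp
    have hβr : β ∈ pdom r := hr.mem_pdom_of_ne hpr hne hβ hpβ
    obtain ⟨y, hyY, hyA⟩ := hY.exists_mem_forall_pair_notMem hA
    have hyM : y ∈ 𝕄.M := 𝕄.classes_sub Y hY.1 hyY
    have hpq : p ⊆ insert (β.pair y) p := fun _ => ZFSet.mem_insert_of_mem _
    refine ⟨insert (β.pair y) p, hr.1.colStarCond_insert_pair hpr hpM hβ hpβ hβr hyY hyM, hpq, ?_⟩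
    intro a haA ha s hs hqs has
    exact (ha.subset_of_insert_pair_subset hs.1.2.1 has hqs hβ hpβ (hyA a haA β)).trans hpq

lemma ClassForcing.leStar_of_le {F : ClassForcing 𝕄} (h : F.le p q) : leStar F.P F.le p q :=
  fun r hr hrp => ⟨r, hr, F.le_refl r hr, F.le_trans r p q hrp h⟩

lemma ClassForcing.decides_of_forall_compat_le {F : ClassForcing 𝕄}
    (h : ∀ a ∈ A, Compat F.P F.le p a → F.le p a) : Decides F.P F.le p A := fun a ha =>
  (em (Compat F.P F.le p a)).imp_left fun hpa => leStar_of_le (h a ha hpa)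

theorem colStar_set_decision_general (hY : IsProperClass 𝕄 Y) (F : ClassForcing 𝕄)
    (hP : F.P = {p : ZFSet | ColStarCond 𝕄 γ Y p})
    (hle : ∀ p ∈ F.P, ∀ q ∈ F.P, (F.le p q ↔ q ⊆ p)) :
    SetDecisionProperty 𝕄 F := by
  have mem_P (p : ZFSet) : p ∈ F.P ↔ ColStarCond 𝕄 γ Y p := hP ▸ Iff.rfl
  intro p hp A hA hAP
  obtain ⟨q, hq, hpq, hqA⟩ := ((mem_P p).1 hp).exists_subset_forall_subset hY hA
  have hqP := (mem_P q).2 hq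
  refine ⟨q, hqP, (hle q hqP p hp).2 hpq, ClassForcing.decides_of_forall_compat_le ?_⟩
  rintro a ha ⟨s, hs, hsq, hsa⟩
  have haP := hAP a ha
  exact (hle q hqP a haP).2 <| hqA a ha ((mem_P a).1 haP) s ((mem_P s).1 hs)
    ((hle s hs q hqP).1 hsq) ((hle s hs a haP).1 hsa)

/-- For `γ ∈ Ord^M` and a proper class `Y ∈ 𝒞` of `𝕄`, the forcing
`Col₋*(γ, Y)^M` (partial functions `γ → Y` in `M` of size `< |γ|^M` whose domain is an
ordinal, ordered by reverse inclusion) has the set decision property. -/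
theorem colStar_set_decision
    (𝕄 : GBModel) (γ : ZFSet) (hγM : γ ∈ 𝕄.M) (hγord : γ.IsOrdinal)
    (Y : Set ZFSet) (hY : IsProperClass 𝕄 Y)
    (F : ClassForcing 𝕄)
    (hP : F.P = {p : ZFSet | ColStarCond 𝕄 γ Y p})
    (hle : ∀ p ∈ F.P, ∀ q ∈ F.P, (F.le p q ↔ q ⊆ p)) :
    SetDecisionProperty 𝕄 F := by
  exact colStar_set_decision_general hY F hP hle

end CF
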